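/- arXiv:math/0610820 — 2 statements merged into one kernel-verified Lean document; each statement's English description precedes it below -/
import Mathlib

section
/- Every connected component of a finite-fold covering space of a solenoid is homeomorphic to that solenoid: if Θ is the solenoid of type (w₁, w₂, …) with each wₙ > 1, π : X → Θ is a covering map, and every fiber of π has exactly r elements for some positive integer r, then each connected component of X is homeomorphic to Θ. -/
open Topology

/-- The solenoid of type `(w 0, w 1, …)` (denoted `(w₁, w₂, …)` in the paper),
as a subgroup of the product of countably many circles:
`{(x₀, x₁, …) : xₙ₋₁ = xₙ ^ wₙ for all n ≥ 1}`. -/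
noncomputable def solenoidSubgroup (w : ℕ → ℕ) : Subgroup (ℕ → Circle) where
  carrier := {x | ∀ n, x n = x (n + 1) ^ w n}
  one_mem' := by intro n; simp
  mul_mem' := by intro a b ha hb n; simp only [Pi.mul_apply, ha n, hb n, mul_pow]
  inv_mem' := by intro a ha n; simp only [Pi.inv_apply, ha n, inv_pow]

/-- The solenoid as a topological space, with the subspace topology from the
product topology. -/
noncomputable abbrev Solenoid (w : ℕ → ℕ) : Type :=
  ↥(solenoidSubgroup w)

namespace SolenoidAux

open Set Filter

variable {w : ℕ → ℕ}

/-- Partial products of the weights. -/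
def sN (w : ℕ → ℕ) (m : ℕ) : ℕ := ∏ i ∈ Finset.range m, w i

lemma sN_succ (w : ℕ → ℕ) (m : ℕ) : sN w (m + 1) = sN w m * w m := Finset.prod_range_succ _ _

lemma sN_pos (hw : ∀ n, 1 < w n) (m : ℕ) : 0 < sN w m :=
  Finset.prod_pos fun i _ => lt_trans one_pos (hw i)

lemma sN_dvd {m n : ℕ} (h : m ≤ n) : sN w m ∣ sN w n := by
  induction n, h using Nat.le_induction with
  | base => exact dvd_rfl
  | succ n _ ih => exact ih.trans ⟨_, sN_succ w n⟩

/-- The one-parameter subgroup. -/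
noncomputable def phi (hw : ∀ n, 1 < w n) (t : ℝ) : Solenoid w :=
  ⟨fun m => Circle.exp (t / sN w m), by
    intro n
    have h1 : (sN w n : ℝ) ≠ 0 := by exact_mod_cast (sN_pos hw n).ne'
    have h2 : (w n : ℝ) ≠ 0 := by have := hw n; positivity
    change Circle.exp _ = Circle.exp _ ^ _
    rw [← Circle.exp_natCast_mul, sN_succ]
    congr 1
    push_cast
    field_simp⟩

lemma phi_apply (hw : ∀ n, 1 < w n) (t : ℝ) (m : ℕ) :
    (phi hw t).1 m = Circle.exp (t / sN w m) := rfl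

lemma phi_add (hw : ∀ n, 1 < w n) (s t : ℝ) : phi hw (s + t) = phi hw s * phi hw t := by
  ext m : 2
  simp [phi_apply, add_div, Circle.exp_add]

lemma phi_zero (hw : ∀ n, 1 < w n) : phi hw 0 = 1 := by
  ext m : 2
  simp [phi_apply]

lemma phi_neg (hw : ∀ n, 1 < w n) (t : ℝ) : phi hw (-t) = (phi hw t)⁻¹ := by
  rw [eq_inv_iff_mul_eq_one, ← phi_add, neg_add_cancel, phi_zero]

lemma phi_nat_mul (hw : ∀ n, 1 < w n) (d : ℕ) (t : ℝ) : phi hw (d * t) = phi hw t ^ d := by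
  induction d with
  | zero => simp [phi_zero]
  | succ d ih => rw [pow_succ, ← ih, ← phi_add]; push_cast; ring_nf

lemma continuous_phi (hw : ∀ n, 1 < w n) : Continuous (phi hw) := by
  refine Continuous.subtype_mk (continuous_pi fun m => ?_) _
  fun_prop

/-- The kernel of the projection to the `n`-th coordinate. -/
def sK (w : ℕ → ℕ) (n : ℕ) : Subgroup (Solenoid w) where
  carrier := {y | y.1 n = 1}
  one_mem' := rfl
  mul_mem' := by
    intro a b ha hb
    change a.1 n * b.1 n = 1
    rw [show a.1 n = 1 from ha, show b.1 n = 1 from hb, one_mul]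
  inv_mem' := by
    intro a ha
    change (a.1 n)⁻¹ = 1
    rw [show a.1 n = 1 from ha, inv_one]

lemma mem_sK {n : ℕ} {y : Solenoid w} : y ∈ sK w n ↔ y.1 n = 1 := Iff.rfl

lemma sK_antitone : Antitone (sK w) := by
  refine antitone_nat_of_succ_le fun n y hy => ?_
  rw [mem_sK] at hy ⊢
  rw [y.2 n, hy, one_pow]

lemma isClosed_sK (n : ℕ) : IsClosed (sK w n : Set (Solenoid w)) :=
  isClosed_eq ((continuous_apply n).comp continuous_subtype_val) continuous_const

lemma sK_small {V : Set (Solenoid w)} (hV : V ∈ 𝓝 (1 : Solenoid w)) :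
    ∃ n, (sK w n : Set (Solenoid w)) ⊆ V := by
  rw [nhds_subtype_eq_comap, mem_comap] at hV
  obtain ⟨U, hU, hUV⟩ := hV
  rw [nhds_pi, Filter.mem_pi] at hU
  obtain ⟨I, hI, t, ht, htU⟩ := hU
  obtain ⟨n, hn⟩ := hI.bddAbove
  refine ⟨n, fun y hy => hUV (htU fun i hi => ?_)⟩
  have : y.1 i = 1 := sK_antitone (hn hi) hy
  rw [this]
  exact mem_of_mem_nhds (ht i)

lemma isClosed_sol : IsClosed (solenoidSubgroup w : Set (ℕ → Circle)) := by
  have : (solenoidSubgroup w : Set (ℕ → Circle)) = ⋂ n, {x | x n = x (n + 1) ^ w n} := by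
    ext x; simp [solenoidSubgroup]
  rw [this]
  exact isClosed_iInter fun n => isClosed_eq (by fun_prop) (by fun_prop)

instance : CompactSpace (Solenoid w) := isCompact_iff_compactSpace.mp isClosed_sol.isCompact

lemma phi_mem_sK (hw : ∀ n, 1 < w n) {t : ℝ} {n : ℕ} :
    phi hw t ∈ sK w n ↔ ∃ j : ℤ, t = 2 * Real.pi * sN w n * j := by
  have h1 : (sN w n : ℝ) ≠ 0 := by exact_mod_cast (sN_pos hw n).ne'
  rw [mem_sK, phi_apply, Circle.exp_eq_one]
  refine exists_congr fun j => ?_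
  rw [div_eq_iff h1]
  constructor <;> intro h <;> rw [h] <;> ring

/-- The local logarithm of the `n`-th coordinate. -/
noncomputable def lg (n : ℕ) (y : Solenoid w) : ℝ := sN w n * Complex.arg (y.1 n)

lemma lg_spec (hw : ∀ n, 1 < w n) (n : ℕ) (y : Solenoid w) :
    (phi hw (lg n y))⁻¹ * y ∈ sK w n := by
  have h1 : (sN w n : ℝ) ≠ 0 := by exact_mod_cast (sN_pos hw n).ne'
  rw [mem_sK]
  change ((phi hw (lg n y)).1 n)⁻¹ * y.1 n = 1
  rw [phi_apply, lg, mul_div_cancel_left₀ _ h1, Circle.exp_arg, inv_mul_cancel]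

lemma lg_mem (n : ℕ) (y : Solenoid w) :
    lg n y ∈ Icc (-(sN w n * Real.pi) : ℝ) (sN w n * Real.pi) := by
  have h0 : (0 : ℝ) ≤ sN w n := Nat.cast_nonneg _
  have h1 := (Complex.neg_pi_lt_arg (y.1 n : ℂ)).le
  have h2 := Complex.arg_le_pi (y.1 n : ℂ)
  constructor
  · rw [← mul_neg]; exact mul_le_mul_of_nonneg_left h1 h0
  · exact mul_le_mul_of_nonneg_left h2 h0

lemma lg_one (n : ℕ) : lg n (1 : Solenoid w) = 0 := by
  change (sN w n : ℝ) * Complex.arg ((1 : Circle) : ℂ) = 0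
  simp

lemma continuousAt_lg (n : ℕ) : ContinuousAt (lg n) (1 : Solenoid w) := by
  refine ContinuousAt.mul continuousAt_const ?_
  have hc : ContinuousAt (fun y : Solenoid w => ((y.1 n : Circle) : ℂ)) 1 := by
    apply Continuous.continuousAt
    exact continuous_subtype_val.comp ((continuous_apply n).comp continuous_subtype_val)
  refine ContinuousAt.comp (g := Complex.arg) (f := fun y : Solenoid w => ((y.1 n : Circle) : ℂ))
    ?_ hc
  apply Complex.continuousAt_arg
  change ((1 : Circle) : ℂ) ∈ Complex.slitPlane
  simp

/-- The solenoid is connected. -/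
lemma preconnected (hw : ∀ n, 1 < w n) : PreconnectedSpace (Solenoid w) := by
  constructor
  have h : closure (range (phi hw)) = univ := by
    refine eq_univ_of_forall fun y => mem_closure_iff_nhds.2 fun V hV => ?_
    have hc : Tendsto (fun k : Solenoid w => y * k⁻¹) (𝓝 1) (𝓝 y) := by
      have : Continuous (fun k : Solenoid w => y * k⁻¹) := by fun_prop
      simpa using this.tendsto 1
    obtain ⟨n, hn⟩ := sK_small (hc hV)
    refine ⟨phi hw (lg n y), ?_, mem_range_self _⟩
    have := hn (lg_spec hw n y)
    simpa using this
  rw [← h]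
  exact (isPreconnected_range (continuous_phi hw)).closure

/-- The quotient presentation `ℝ × K_n → Θ`. -/
noncomputable def sqt (hw : ∀ n, 1 < w n) (n : ℕ) (p : ℝ × sK w n) : Solenoid w :=
  phi hw p.1 * p.2

lemma continuous_sq (hw : ∀ n, 1 < w n) (n : ℕ) : Continuous (sqt hw n) :=
  ((continuous_phi hw).comp continuous_fst).mul (continuous_subtype_val.comp continuous_snd)

lemma sq_surj (hw : ∀ n, 1 < w n) (n : ℕ) : Function.Surjective (sqt hw n) := fun y =>
  ⟨(lg n y, ⟨_, lg_spec hw n y⟩), by simp [sqt]⟩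

lemma isQuotientMap_sq (hw : ∀ n, 1 < w n) (n : ℕ) : IsQuotientMap (sqt hw n) := by
  have : CompactSpace (sK w n) := isCompact_iff_compactSpace.mp (isClosed_sK n).isCompact
  let ι : Icc (-(sN w n * Real.pi) : ℝ) (sN w n * Real.pi) × sK w n → ℝ × sK w n :=
    fun p => (p.1.1, p.2)
  have hι : Continuous ι := by fun_prop
  refine IsQuotientMap.of_comp hι (continuous_sq hw n) ?_
  have hc := (continuous_sq hw n).comp hι
  refine hc.isClosedMap.isQuotientMap hc fun y => ?_
  exact ⟨(⟨lg n y, lg_mem n y⟩, ⟨_, lg_spec hw n y⟩), by simp [ι, sqt]⟩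

/-- Elements of `K_n` have order dividing `N_m` in the `m`-th coordinate (up to smaller factors). -/
lemma sK_coprime_pow (hw : ∀ n, 1 < w n) {n d : ℕ} (hd : ∀ m, n ≤ m → Nat.Coprime d (w m))
    {m : ℕ} (hm : n ≤ m) : ∃ M : ℕ, 0 < M ∧ Nat.Coprime d M ∧ M ∣ sN w m ∧
      ∀ y ∈ sK w n, y.1 m ^ M = 1 := by
  induction m, hm using Nat.le_induction with
  | base => exact ⟨1, one_pos, Nat.coprime_one_right d, one_dvd _, fun y hy => by rw [pow_one]; exact hy⟩
  | succ m hm ih =>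
    obtain ⟨M, h0, h1, h2, h3⟩ := ih
    refine ⟨M * w m, by have := hw m; positivity, h1.mul_right (hd m hm), ?_, fun y hy => ?_⟩
    · rw [sN_succ]; exact mul_dvd_mul_right h2 _
    · rw [mul_comm, pow_mul, ← y.2 m, h3 y hy]

lemma pow_inj_aux {G : Type*} [CommGroup G] {d M : ℕ} (h : Nat.Coprime d M) {a : G}
    (h1 : a ^ M = 1) (h2 : a ^ d = 1) : a = 1 := by
  have := orderOf_dvd_of_pow_eq_one h1
  have h' := orderOf_dvd_of_pow_eq_one h2
  exact orderOf_eq_one_iff.1 (Nat.eq_one_of_dvd_coprimes h h' this)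

lemma sK_pow_eq_one (hw : ∀ n, 1 < w n) {n d : ℕ} (hd : ∀ m, n ≤ m → Nat.Coprime d (w m))
    {y : Solenoid w} (hy : y ∈ sK w n) (h : y ^ d = 1) : y = 1 := by
  have key : ∀ m, n ≤ m → y.1 m = 1 := by
    intro m hm
    obtain ⟨M, -, h1, -, h3⟩ := sK_coprime_pow hw hd hm
    exact pow_inj_aux h1 (h3 y hy) (congrFun (congrArg Subtype.val h) m)
  ext m : 2
  change y.1 m = 1
  rcases le_total n m with hm | hm
  · exact key m hm
  · exact sK_antitone hm hy

lemma sK_pow_surj (hw : ∀ n, 1 < w n) {n d : ℕ} (hd : ∀ m, n ≤ m → Nat.Coprime d (w m))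
    {y : Solenoid w} (hy : y ∈ sK w n) : ∃ z ∈ sK w n, z ^ d = y := by
  have key : ∀ m, ∃ a : Circle, a ^ d = y.1 m ∧ (m ≤ n → a = 1) ∧
      (∀ M, Nat.Coprime d M → y.1 m ^ M = 1 → a ^ M = 1) := by
    intro m
    rcases le_total m n with hm | hm
    · have : y.1 m = 1 := sK_antitone hm hy
      exact ⟨1, by simp [this], fun _ => rfl, fun M _ _ => one_pow _⟩
    · obtain ⟨M, h0, h1, h2, h3⟩ := sK_coprime_pow hw hd hm
      have hM := h3 y hy
      have hco : (orderOf (y.1 m)).Coprime d :=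
        (Nat.Coprime.coprime_dvd_right (orderOf_dvd_of_pow_eq_one hM) h1).symm
      obtain ⟨e, he⟩ := exists_pow_eq_self_of_coprime hco.symm
      refine ⟨y.1 m ^ e, ?_, ?_, ?_⟩
      · rw [← pow_mul, mul_comm, pow_mul, he]
      · intro h
        have : y.1 m = 1 := sK_antitone h hy
        rw [this, one_pow]
      · intro M' _ h
        rw [← pow_mul, mul_comm, pow_mul, h, one_pow]
  choose a ha ha1 haM using key
  refine ⟨⟨a, fun m => ?_⟩, ha1 n le_rfl, ?_⟩
  · rcases lt_or_ge m n with hm | hm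
    · rw [ha1 m hm.le, ha1 (m + 1) hm, one_pow]
    · obtain ⟨M, h0, h1, h2, h3⟩ := sK_coprime_pow hw hd hm
      have hM := h3 y hy
      have hM' : y.1 (m + 1) ^ (w m * M) = 1 := by rw [pow_mul, ← y.2 m, hM]
      have e1 := haM m M h1 hM
      have e2 := haM (m + 1) (w m * M) ((hd m hm).mul_right h1) hM'
      rw [← div_eq_one]
      apply pow_inj_aux h1
      · rw [div_pow, e1, ← pow_mul, e2, div_one]
      · rw [div_pow, ha, ← pow_mul, mul_comm, pow_mul, ha, ← y.2 m, div_self']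
  · ext m : 2
    exact ha m

end SolenoidAux

namespace SolenoidAux

open Set Filter

section Covering

variable {X G : Type*} [TopologicalSpace X] [TopologicalSpace G] {π : X → G}

lemma t2_of_covering [T2Space G] (hπ : IsCoveringMap π) : T2Space X := by
  refine ⟨fun x y hxy => ?_⟩
  by_cases h : π x = π y
  · exact hπ.isSeparatedMap x y h hxy
  · obtain ⟨U, V, hU, hV, hx, hy, hd⟩ := t2_separation h
    exact ⟨_, _, hU.preimage hπ.continuous, hV.preimage hπ.continuous, hx, hy, hd.preimage π⟩

lemma compact_of_covering [T2Space G] [CompactSpace G] (hπ : IsCoveringMap π)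
    (hfin : ∀ y, Finite (π ⁻¹' {y})) : CompactSpace X := by
  have key : ∀ y : G, ∃ C ∈ 𝓝 y, IsCompact (π ⁻¹' C) := by
    intro y
    obtain ⟨hdisc, U, hyU, hU, hUo, H, hH⟩ := hπ y
    obtain ⟨C, hC, hCU, hCc⟩ := local_compact_nhds (hU.mem_nhds hyU)
    refine ⟨C, hC, ?_⟩
    have := hfin y
    have h1 : IsCompact ((Subtype.val ⁻¹' C : Set U) ×ˢ (univ : Set (π ⁻¹' {y}))) := by
      refine IsCompact.prod ?_ isCompact_univ
      rw [Subtype.isCompact_iff, Subtype.image_preimage_coe, inter_eq_right.2 hCU]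
      exact hCc
    have h2 := (h1.image H.symm.continuous).image continuous_subtype_val
    convert h2 using 1
    ext x
    constructor
    · intro hx
      refine ⟨⟨x, hCU hx⟩, ⟨H ⟨x, hCU hx⟩, ⟨?_, mem_univ _⟩, by simp⟩, rfl⟩
      rw [mem_preimage, hH]
      exact hx
    · rintro ⟨x', ⟨p, ⟨hp, -⟩, rfl⟩, rfl⟩
      have := hH (H.symm p)
      rw [H.apply_symm_apply] at this
      rw [mem_preimage, ← this]
      exact hp
  choose C hC hCc using key
  obtain ⟨t, -, ht⟩ := isCompact_univ.elim_nhds_subcover C fun y _ => hC y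
  constructor
  have : (univ : Set X) = ⋃ y ∈ t, π ⁻¹' C y := by
    refine (eq_univ_of_forall fun x => ?_).symm
    have := ht (mem_univ (π x))
    simpa using this
  rw [this]
  exact t.finite_toSet.isCompact_biUnion fun y _ => hCc y

/-- The local transport action of a small subgroup on a finite covering. -/
lemma exists_action [CommGroup G] [IsTopologicalGroup G] [T2Space G] [CompactSpace G]
    (hπ : IsCoveringMap π) (hfin : ∀ y, Finite (π ⁻¹' {y}))
    (K : ℕ → Subgroup G) (hanti : Antitone K) (hsmall : ∀ V ∈ 𝓝 (1 : G), ∃ n, (K n : Set G) ⊆ V) :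
    ∃ n, ∃ m : X → G → X,
      ContinuousOn (fun p : X × G => m p.1 p.2) (univ ×ˢ (K n : Set G)) ∧
      (∀ x, ∀ k ∈ K n, π (m x k) = π x * k) ∧ (∀ x, m x 1 = x) ∧
      (∀ x, ∀ k ∈ K n, ∀ l ∈ K n, m (m x k) l = m x (k * l)) := by
  have := t2_of_covering hπ
  have := compact_of_covering hπ hfin
  let _ : UniformSpace X := uniformSpaceOfCompactR1
  -- uniform local injectivity
  have hinj : {p : X × X | π p.1 = π p.2 → p.1 = p.2} ∈ uniformity X := by
    rw [← nhdsSet_diagonal_eq_uniformity, mem_nhdsSet_iff_forall]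
    rintro ⟨x, y⟩ hxy
    obtain rfl : x = y := hxy
    obtain ⟨U, hU, hxU, hinj⟩ := hπ.isLocalHomeomorph.isLocallyInjective x
    filter_upwards [prod_mem_nhds (hU.mem_nhds hxU) (hU.mem_nhds hxU)] with p hp h
    exact hinj hp.1 hp.2 h
  obtain ⟨D₀, hD₀, hs₀, hD₀'⟩ := comp_symm_mem_uniformity_sets hinj
  have hD₀'' : ∀ a b c : X, (a, b) ∈ D₀ → (a, c) ∈ D₀ → π b = π c → b = c := fun a b c hb hc h =>
    hD₀' (show (b, c) ∈ _ from ⟨a, hs₀.symm _ _ hb, hc⟩) h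
  obtain ⟨D₁, hD₁, hs₁, hD₁'⟩ := comp_symm_mem_uniformity_sets hD₀
  obtain ⟨D₂, ⟨hD₂, hcl⟩, hD₂'⟩ := uniformity_hasBasis_closed.mem_iff.1 hD₁
  simp only [id] at hD₂'
  obtain ⟨D₃, hD₃, hs₃, hD₃'⟩ := comp_symm_mem_uniformity_sets hD₂
  -- existence
  have hex : ∃ n, ∀ x ∈ (univ : Set X), ∀ k ∈ K n, ∃ x', (x, x') ∈ D₂ ∧ π x' = π x * k := by
    refine isCompact_univ.induction_on (p := fun S =>
      ∃ n, ∀ x ∈ S, ∀ k ∈ K n, ∃ x', (x, x') ∈ D₂ ∧ π x' = π x * k) ⟨0, by simp⟩ ?_ ?_ ?_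
    · rintro s t hst ⟨n, hn⟩
      exact ⟨n, fun x hx => hn x (hst hx)⟩
    · rintro s t ⟨n, hn⟩ ⟨n', hn'⟩
      refine ⟨max n n', fun x hx k hk => ?_⟩
      rcases hx with hx | hx
      · exact hn x hx k (hanti (le_max_left _ _) hk)
      · exact hn' x hx k (hanti (le_max_right _ _) hk)
    · intro x₀ _
      have hB : {y | (x₀, y) ∈ D₃} ∈ 𝓝 x₀ := mem_nhds_left x₀ hD₃
      have hB' : π '' {y | (x₀, y) ∈ D₃} ∈ 𝓝 (π x₀) := hπ.isOpenMap.image_mem_nhds hB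
      have hc : Tendsto (fun p : X × G => π p.1 * p.2) (𝓝 (x₀, 1)) (𝓝 (π x₀)) := by
        have : Continuous (fun p : X × G => π p.1 * p.2) :=
          (hπ.continuous.comp continuous_fst).mul continuous_snd
        simpa using this.tendsto (x₀, 1)
      have h := hc hB'
      rw [nhds_prod_eq, mem_map, mem_prod_iff] at h
      obtain ⟨S, hS, V, hV, hSV⟩ := h
      obtain ⟨n, hn⟩ := hsmall V hV
      refine ⟨S ∩ {y | (x₀, y) ∈ D₃}, mem_nhdsWithin_of_mem_nhds (inter_mem hS hB), n, ?_⟩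
      intro x hx k hk
      obtain ⟨x', hx', hx''⟩ := hSV (mk_mem_prod hx.1 (hn hk))
      exact ⟨x', hD₃' ⟨x₀, hs₃.symm _ _ hx.2, hx'⟩, hx''⟩
  obtain ⟨n, hn⟩ := hex
  have huniq : ∀ x y z : X, (x, y) ∈ D₂ → (x, z) ∈ D₂ → π y = π z → y = z := by
    intro x y z hy hz h
    refine hD₀'' x y z ?_ ?_ h
    · exact hD₁' ⟨x, refl_mem_uniformity hD₁, hD₂' hy⟩
    · exact hD₁' ⟨x, refl_mem_uniformity hD₁, hD₂' hz⟩
  have hex' : ∀ x k, ∃ x', k ∈ K n → (x, x') ∈ D₂ ∧ π x' = π x * k := by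
    intro x k
    by_cases hk : k ∈ K n
    · obtain ⟨x', h⟩ := hn x (mem_univ _) k hk
      exact ⟨x', fun _ => h⟩
    · exact ⟨x, fun h => absurd h hk⟩
  choose m hm using hex'
  refine ⟨n, m, ?_, fun x k hk => (hm x k hk).2, ?_, ?_⟩
  · rw [continuousOn_iff_continuous_domRestrict, continuous_iff_ultrafilter]
    rintro ⟨⟨x, k⟩, hu, hk⟩ F hF₀
    have hF : Tendsto (fun p : (univ ×ˢ (K n : Set G) : Set (X × G)) => p.1) F (𝓝 (x, k)) :=
      (continuous_subtype_val.tendsto _).mono_left hF₀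
    have hFx : Tendsto (fun p : (univ ×ˢ (K n : Set G) : Set (X × G)) => p.1.1) F (𝓝 x) :=
      (continuous_fst.tendsto (x, k)).comp hF
    have hFk : Tendsto (fun p : (univ ×ˢ (K n : Set G) : Set (X × G)) => p.1.2) F (𝓝 k) :=
      (continuous_snd.tendsto (x, k)).comp hF
    obtain ⟨z, -, hz⟩ := isCompact_univ.ultrafilter_le_nhds
      (F.map fun p : (univ ×ˢ (K n : Set G) : Set (X × G)) => m p.1.1 p.1.2) (by simp)
    have hz' : Tendsto (fun p : (univ ×ˢ (K n : Set G) : Set (X × G)) => m p.1.1 p.1.2) F (𝓝 z) :=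
      hz
    have h1 : (x, z) ∈ D₂ :=
      hcl.mem_of_tendsto (hFx.prodMk_nhds hz') (Eventually.of_forall fun p => (hm _ _ p.2.2).1)
    have h2 : π z = π x * k := by
      refine tendsto_nhds_unique ((hπ.continuous.tendsto z).comp hz') ?_
      refine (((hπ.continuous.tendsto x).comp hFx).mul hFk).congr fun p => ?_
      exact (hm _ _ p.2.2).2.symm
    have h3 : z = m x k := huniq x _ _ h1 (hm x k hk).1 (h2.trans (hm x k hk).2.symm)
    rw [h3] at hz'
    exact hz'
  · intro x
    have h := hm x 1 (one_mem _)
    exact huniq x _ _ h.1 (refl_mem_uniformity hD₂) (by rw [h.2, mul_one])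
  · intro x k hk l hl
    have h1 := hm x k hk
    have h2 := hm (m x k) l hl
    have h3 := hm x (k * l) (mul_mem hk hl)
    refine hD₀'' x _ _ ?_ ?_ (by rw [h2.2, h1.2, h3.2, mul_assoc])
    · exact hD₁' ⟨_, hD₂' h1.1, hD₂' h2.1⟩
    · exact hD₁' ⟨x, refl_mem_uniformity hD₁, hD₂' h3.1⟩

end Covering

end SolenoidAux

/-- **Every connected component of a finite-fold covering space of a solenoid is
homeomorphic to that solenoid.** -/
theorem component_of_covering_of_solenoid_homeomorphic
    (w : ℕ → ℕ) (hw : ∀ n, 1 < w n)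
    (X : Type*) [TopologicalSpace X] (π : X → Solenoid w)
    (hπ : IsCoveringMap π) (r : ℕ) (hr : 0 < r)
    (hfib : ∀ y : Solenoid w, Nat.card (π ⁻¹' {y}) = r) :
    ∀ x : X, Nonempty (↥(connectedComponent x) ≃ₜ Solenoid w) := by
  open SolenoidAux Set Filter in
  intro x
  have hfin : ∀ y, Finite (π ⁻¹' {y}) := fun y =>
    Nat.finite_of_card_ne_zero (by rw [hfib]; exact hr.ne')
  have hT2 := t2_of_covering hπ
  obtain ⟨n₀, m, hmc, hmπ, hm1, hmm⟩ := exists_action hπ hfin (sK w) sK_antitone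
    (fun V hV => sK_small hV)
  -- the lifted flow line through `x`
  obtain ⟨γ, ⟨hγ0, hγ⟩, -⟩ := hπ.existsUnique_continuousMap_lifts
    (⟨fun t => π x * phi hw t, continuous_const.mul (continuous_phi hw)⟩ : C(ℝ, Solenoid w)) 0 x
    (by simp [phi_zero])
  have hγπ : ∀ t, π (γ t) = π x * phi hw t := fun t => congrFun hγ t
  have hper : ∀ t, phi hw t ∈ sK w n₀ → ∀ s₀, γ (s₀ + t) = m (γ s₀) (phi hw t) →
      ∀ s, γ (s + t) = m (γ s) (phi hw t) := by
    intro t ht s₀ h s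
    have hc2 : Continuous fun s => m (γ s) (phi hw t) :=
      hmc.comp_continuous (f := fun s => (γ s, phi hw t)) (by fun_prop)
        (fun s => ⟨mem_univ _, ht⟩)
    refine congrFun (hπ.eq_of_comp_eq (g₁ := fun s => γ (s + t)) (by fun_prop) hc2 ?_ s₀ h) s
    funext s
    simp only [Function.comp]
    rw [hγπ, hmπ _ _ ht, hγπ, phi_add, mul_assoc]
  -- the group of periods
  let A : AddSubgroup ℝ :=
    { carrier := {t | phi hw t ∈ sK w n₀ ∧ ∀ s, γ (s + t) = m (γ s) (phi hw t)}
      zero_mem' := ⟨by rw [phi_zero]; exact one_mem _, fun s => by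
        rw [phi_zero, hm1, add_zero]⟩
      add_mem' := by
        rintro a b ⟨ha, ha'⟩ ⟨hb, hb'⟩
        refine ⟨by rw [phi_add]; exact mul_mem ha hb, fun s => ?_⟩
        rw [← add_assoc, hb', ha', hmm _ _ ha _ hb, phi_add]
      neg_mem' := by
        rintro a ⟨ha, ha'⟩
        have hna : phi hw (-a) ∈ sK w n₀ := by rw [phi_neg]; exact inv_mem ha
        refine ⟨hna, fun s => ?_⟩
        have h := ha' (s + -a)
        rw [neg_add_cancel_right] at h
        rw [h, hmm _ _ ha _ hna, ← phi_add, add_neg_cancel, phi_zero, hm1] }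
  have hA : ∀ t, t ∈ A ↔ phi hw t ∈ sK w n₀ ∧ ∀ s, γ (s + t) = m (γ s) (phi hw t) :=
    fun t => Iff.rfl
  let c : ℕ → ℝ := fun n => 2 * Real.pi * sN w n
  have hcK : ∀ n (j : ℤ), phi hw (c n * j) ∈ sK w n := fun n j => (phi_mem_sK hw).2 ⟨j, rfl⟩
  have hQex : ∃ d : ℕ, 0 < d ∧ ∃ n, n₀ ≤ n ∧ c n * d ∈ A := by
    have hK' : ∀ j : ℕ, phi hw (c n₀ * j) ∈ sK w n₀ := fun j => by
      simpa using hcK n₀ (j : ℤ)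
    let f : ℕ → π ⁻¹' {π x} := fun j =>
      ⟨m (γ (c n₀ * j)) (phi hw (c n₀ * j))⁻¹, by
        rw [mem_preimage, hmπ _ _ (inv_mem (hK' j)), hγπ, mul_inv_cancel_right]; rfl⟩
    have hff : ∀ i j : ℕ, i < j → f i = f j → ∃ d : ℕ, 0 < d ∧ ∃ n, n₀ ≤ n ∧ c n * d ∈ A := by
      intro i j hij h
      refine ⟨j - i, Nat.sub_pos_of_lt hij, n₀, le_rfl, ?_⟩
      have h' : m (γ (c n₀ * i)) (phi hw (c n₀ * i))⁻¹ =
        m (γ (c n₀ * j)) (phi hw (c n₀ * j))⁻¹ := congrArg Subtype.val h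
      have h2 := congrArg (fun z => m z (phi hw (c n₀ * j))) h'
      beta_reduce at h2
      rw [hmm _ _ (inv_mem (hK' i)) _ (hK' j), hmm _ _ (inv_mem (hK' j)) _ (hK' j),
        inv_mul_cancel, hm1] at h2
      have e : c n₀ * j = c n₀ * i + c n₀ * ((j - i : ℕ) : ℝ) := by
        rw [Nat.cast_sub hij.le]; ring
      have e2 : (phi hw (c n₀ * i))⁻¹ * phi hw (c n₀ * j) =
          phi hw (c n₀ * ((j - i : ℕ) : ℝ)) := by
        rw [e, phi_add, inv_mul_cancel_left]
      rw [e2, e] at h2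
      exact ⟨hK' _, hper _ (hK' _) _ h2.symm⟩
    obtain ⟨i, j, hij, h⟩ := Finite.exists_ne_map_eq_of_infinite f
    rcases lt_or_gt_of_ne hij with h1 | h1
    · exact hff i j h1 h
    · exact hff j i h1 h.symm
  classical
  obtain ⟨d, ⟨hd0, n, hn, hdA⟩, hmin⟩ : ∃ d : ℕ, (0 < d ∧ ∃ n, n₀ ≤ n ∧ c n * d ∈ A) ∧
      ∀ e : ℕ, (0 < e ∧ ∃ n, n₀ ≤ n ∧ c n * e ∈ A) → d ≤ e :=
    ⟨Nat.find hQex, Nat.find_spec hQex, fun e he => Nat.find_min' hQex he⟩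
  have hAint : ∀ t ∈ A, ∀ j : ℤ, t * j ∈ A := fun t ht j => by
    have := A.zsmul_mem ht j
    rwa [zsmul_eq_mul, mul_comm] at this
  have hmono : ∀ l, n ≤ l → c l * d ∈ A := by
    intro l hl
    obtain ⟨q, hq⟩ := sN_dvd (w := w) hl
    have := hAint _ hdA q
    convert this using 1
    simp only [c, hq]
    push_cast
    ring
  have hcop : ∀ l, n ≤ l → Nat.Coprime d (w l) := by
    intro l hl
    by_contra hne
    obtain ⟨p, hp, ⟨a, ha⟩, ⟨b, hb⟩⟩ := Nat.Prime.not_coprime_iff_dvd.1 hne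
    have ha0 : 0 < a := Nat.pos_of_ne_zero fun h => by simp [h] at ha; omega
    have h1 : c (l + 1) * a ∈ A := by
      have := hAint _ (hmono l hl) b
      convert this using 1
      simp only [c, sN_succ, ha, hb]
      push_cast
      ring
    have h2 := hmin a ⟨ha0, l + 1, by omega, h1⟩
    have := hp.two_le
    nlinarith
  have hdvd : ∀ j : ℤ, c n * j ∈ A → (d : ℤ) ∣ j := by
    intro j hj
    have hdz : (0 : ℤ) < d := by exact_mod_cast hd0
    have h1 : c n * ((j % d : ℤ) : ℝ) ∈ A := by
      have := A.sub_mem hj (hAint _ hdA (j / d))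
      convert this using 1
      have e : ((j % d : ℤ) : ℝ) = j - d * ((j / d : ℤ) : ℝ) := by
        rw [Int.emod_def]; push_cast; ring
      rw [e]; ring
    have h2 := Int.emod_nonneg j hdz.ne'
    have h3 := Int.emod_lt_of_pos j hdz
    obtain ⟨e, he⟩ := Int.eq_ofNat_of_zero_le h2
    rcases Nat.eq_zero_or_pos e with h0 | h0
    · exact Int.dvd_of_emod_eq_zero (by rw [he, h0]; rfl)
    · exfalso
      have h4 := hmin e ⟨h0, n, hn, by rw [he] at h1; exact_mod_cast h1⟩
      rw [he] at h3
      have : e < d := by exact_mod_cast h3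
      omega
  have hKn : ∀ {k}, k ∈ sK w n → k ∈ sK w n₀ := fun hk => sK_antitone hn hk
  -- the map on the cover `ℝ × K_n`
  let H : ℝ × sK w n → X := fun p => m (γ (d * p.1)) ((p.2 : Solenoid w) ^ d)
  have hHc : Continuous H := by
    refine hmc.comp_continuous (f := fun p : ℝ × sK w n => (γ (d * p.1), (p.2 : Solenoid w) ^ d))
      ?_ (fun p => ⟨mem_univ _, hKn (pow_mem p.2.2 d)⟩)
    fun_prop
  have hH1 : ∀ p q, sqt hw n p = sqt hw n q → H p = H q := by
    rintro ⟨s, k, hk⟩ ⟨t, l, hl⟩ h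
    simp only [sqt] at h
    simp only [H]
    have e1 : phi hw (s - t) * k = l := by
      rw [sub_eq_neg_add, phi_add, phi_neg, mul_assoc, h, inv_mul_cancel_left]
    have e2 : phi hw (s - t) ∈ sK w n := by
      have : phi hw (s - t) = l * k⁻¹ := by rw [← e1, mul_inv_cancel_right]
      rw [this]; exact mul_mem hl (inv_mem hk)
    obtain ⟨j, hj⟩ := (phi_mem_sK hw).1 e2
    have hjA : (d : ℝ) * (s - t) ∈ A := by
      have := hAint _ hdA j
      convert this using 1
      rw [hj]; simp only [c]; ring
    have e3 := hjA.2 (d * t)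
    rw [show (d : ℝ) * t + d * (s - t) = d * s by ring] at e3
    rw [e3, hmm _ _ hjA.1 _ (hKn (pow_mem hk d)), phi_nat_mul, ← mul_pow, e1]
  have hH2 : ∀ p q, H p = H q → sqt hw n p = sqt hw n q := by
    rintro ⟨s, k, hk⟩ ⟨t, l, hl⟩ h
    simp only [sqt]
    simp only [H] at h
    have hkd := pow_mem hk d
    have hld := pow_mem hl d
    have e1 := congrArg π h
    rw [hmπ _ _ (hKn hkd), hmπ _ _ (hKn hld), hγπ, hγπ, mul_assoc, mul_assoc,
      mul_right_inj] at e1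
    have e2 : phi hw (d * (s - t)) = l ^ d * (k ^ d)⁻¹ := by
      rw [mul_sub, sub_eq_neg_add, phi_add, phi_neg, inv_mul_eq_iff_eq_mul, ← mul_assoc, ← e1,
        mul_inv_cancel_right]
    have e3 : phi hw (d * (s - t)) ∈ sK w n := by
      rw [e2]; exact mul_mem hld (inv_mem hkd)
    obtain ⟨j, hj⟩ := (phi_mem_sK hw).1 e3
    have e4 : (d : ℝ) * (s - t) ∈ A := by
      refine ⟨hKn e3, hper _ (hKn e3) (d * t) ?_⟩
      rw [show (d : ℝ) * t + d * (s - t) = d * s by ring]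
      have := congrArg (fun z => m z (k ^ d)⁻¹) h
      beta_reduce at this
      rw [hmm _ _ (hKn hkd) _ (hKn (inv_mem hkd)), mul_inv_cancel, hm1,
        hmm _ _ (hKn hld) _ (hKn (inv_mem hkd)), ← e2] at this
      exact this
    rw [hj] at e4
    obtain ⟨i, hi⟩ := hdvd j e4
    have hdR : (d : ℝ) ≠ 0 := by exact_mod_cast hd0.ne'
    have e5 : s - t = c n * i := by
      apply mul_left_cancel₀ hdR
      rw [hj, hi]; simp only [c]; push_cast; ring
    have e6 : phi hw (s - t) ∈ sK w n := by rw [e5]; exact hcK n i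
    have e7 : phi hw (s - t) * k * l⁻¹ = 1 := by
      refine sK_pow_eq_one hw hcop (mul_mem (mul_mem e6 hk) (inv_mem hl)) ?_
      rw [mul_pow, mul_pow, ← phi_nat_mul, e2, inv_mul_cancel_right, inv_pow, mul_inv_cancel]
    have e8 := mul_inv_eq_one.1 e7
    rw [← e8, ← mul_assoc, ← phi_add, add_sub_cancel]
  -- the induced embedding
  obtain ⟨h, hh⟩ : ∃ h : Solenoid w → X, ∀ p, h (sqt hw n p) = H p := by
    refine ⟨fun y => H (Function.surjInv (sq_surj hw n) y), fun p => ?_⟩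
    exact hH1 _ _ (Function.surjInv_eq _ _)
  have hhc : Continuous h := by
    rw [(isQuotientMap_sq hw n).continuous_iff]
    exact hHc.congr fun p => (hh p).symm
  have hhi : Function.Injective h := by
    intro y z hyz
    obtain ⟨p, rfl⟩ := sq_surj hw n y
    obtain ⟨q, rfl⟩ := sq_surj hw n z
    rw [hh, hh] at hyz
    exact hH2 _ _ hyz
  have hrange : ∀ z, z ∈ range h ↔ ∃ t, ∃ k ∈ sK w n, m (γ t) k = z := by
    intro z
    constructor
    · rintro ⟨y, rfl⟩
      obtain ⟨p, rfl⟩ := sq_surj hw n y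
      exact ⟨_, _, pow_mem p.2.2 d, (hh p).symm⟩
    · rintro ⟨t, k, hk, rfl⟩
      obtain ⟨k', hk', rfl⟩ := sK_pow_surj hw hcop hk
      refine ⟨sqt hw n (t / d, ⟨k', hk'⟩), ?_⟩
      have hdR : (d : ℝ) ≠ 0 := by exact_mod_cast hd0.ne'
      rw [hh]
      simp only [H]
      rw [mul_div_cancel₀ _ hdR]
  have hopen : IsOpen (range h) := by
    rw [isOpen_iff_mem_nhds]
    intro z hz
    obtain ⟨t, k, hk, rfl⟩ := (hrange z).1 hz
    set z := m (γ t) k with hzdef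
    let y : X → Solenoid w := fun u => (π z)⁻¹ * π u
    have hy : Tendsto y (𝓝 z) (𝓝 1) := by
      have : Continuous y := continuous_const.mul hπ.continuous
      have := this.tendsto z
      simpa [y] using this
    let κ : X → Solenoid w := fun u => (phi hw (lg n (y u)))⁻¹ * y u
    have hlg : Tendsto (fun u => lg n (y u)) (𝓝 z) (𝓝 0) := by
      have := (continuousAt_lg (w := w) n).tendsto.comp hy
      rwa [lg_one] at this
    have hκ : Tendsto κ (𝓝 z) (𝓝 1) := by
      have h1 := ((((continuous_phi hw).tendsto 0).comp hlg).inv).mul hy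
      simpa [phi_zero] using h1
    have hκK : ∀ u, κ u ∈ sK w n := fun u => lg_spec hw n (y u)
    let W : X → X := fun u => m (γ (t + lg n (y u))) (k * κ u)
    have hW : Tendsto W (𝓝 z) (𝓝 z) := by
      have h1 : ContinuousWithinAt (fun p : X × Solenoid w => m p.1 p.2)
        (univ ×ˢ (sK w n₀ : Set (Solenoid w))) (γ t, k) := hmc _ ⟨mem_univ _, hKn hk⟩
      refine h1.tendsto.comp (f := fun u => (γ (t + lg n (y u)), k * κ u)) (tendsto_nhdsWithin_iff.2 ⟨?_, Eventually.of_forall fun u =>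
        ⟨mem_univ _, hKn (mul_mem hk (hκK u))⟩⟩)
      refine Tendsto.prodMk_nhds ?_ ?_
      · refine (γ.continuous.tendsto t).comp ?_
        simpa using (tendsto_const_nhds (x := t)).add hlg
      · simpa using (tendsto_const_nhds (x := k)).mul hκ
    obtain ⟨U, hU, hzU, hinj⟩ := hπ.isLocalHomeomorph.isLocallyInjective z
    filter_upwards [hU.mem_nhds hzU, hW (hU.mem_nhds hzU)] with u hu hWu
    have hWπ : π (W u) = π u := by
      have hz' : π z = π x * phi hw t * k := by rw [hzdef, hmπ _ _ (hKn hk), hγπ]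
      have : π (W u) = π z * y u := by
        simp only [W]
        rw [hmπ _ _ (hKn (mul_mem hk (hκK u))), hγπ, phi_add, hz']
        simp only [κ]
        rw [mul_left_comm k, ← mul_assoc, ← mul_assoc (π x), mul_inv_cancel_right, mul_assoc,
          mul_assoc, mul_assoc]
      rw [this]
      simp [y]
    have : W u = u := hinj hWu hu hWπ
    rw [← this]
    exact (hrange _).2 ⟨_, _, mul_mem hk (hκK u), rfl⟩
  have hclosed : IsClosed (range h) := (isCompact_range hhc).isClosed
  have hx : x ∈ range h := (hrange x).2 ⟨0, 1, one_mem _, by rw [hm1, hγ0]⟩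
  have := preconnected hw
  have hcc : connectedComponent x = range h := by
    refine Subset.antisymm ?_ ?_
    · exact IsClopen.connectedComponent_subset ⟨hclosed, hopen⟩ hx
    · exact (isPreconnected_range hhc).subset_connectedComponent hx
  have hemb : IsEmbedding h := (hhc.isClosedEmbedding hhi).isEmbedding
  exact ⟨(Homeomorph.setCongr hcc).trans hemb.toHomeomorph.symm⟩
end

section
/- A solenoid of type (w₁, w₂, …) admits a connected r-fold covering if and only if r is relatively prime to all but finitely many of the wₙ. That is, for a positive integer r, there exist a connected space X and a covering map π : X → Θ all of whose fibers have exactly r elements if and only if there exists N such that gcd(r, wₙ) = 1 for all n > N. -/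
open Topology

namespace SolenoidProof

lemma mem_iff (w : ℕ → ℕ) (x : ℕ → Circle) :
    x ∈ solenoidSubgroup w ↔ ∀ n, x n = x (n + 1) ^ w n := Iff.rfl

lemma rel {w : ℕ → ℕ} (x : Solenoid w) (n : ℕ) : x.1 n = x.1 (n + 1) ^ w n := x.2 n

lemma rel_add {w : ℕ → ℕ} (x : Solenoid w) (n k : ℕ) :
    x.1 n = x.1 (n + k) ^ ∏ i ∈ Finset.range k, w (n + i) := by
  induction k with
  | zero => simp
  | succ k ih =>
    rw [ih, rel x (n + k), ← pow_mul, Finset.prod_range_succ, mul_comm, add_assoc]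

lemma coord_agree {w : ℕ → ℕ} {x y : Solenoid w} {n m : ℕ} (h : n ≤ m) (e : x.1 m = y.1 m) :
    x.1 n = y.1 n := by
  obtain ⟨k, rfl⟩ := Nat.exists_eq_add_of_le h
  rw [rel_add x n k, rel_add y n k, e]

lemma continuous_coord {w : ℕ → ℕ} (n : ℕ) : Continuous fun x : Solenoid w => x.1 n :=
  (continuous_apply n).comp continuous_subtype_val

instance compactSpace (w : ℕ → ℕ) : CompactSpace (Solenoid w) := by
  have : IsClosed ((solenoidSubgroup w : Set (ℕ → Circle))) := by
    have : (solenoidSubgroup w : Set (ℕ → Circle)) = ⋂ n, {x | x n = x (n + 1) ^ w n} := by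
      ext x; simp [mem_iff]
    rw [this]
    exact isClosed_iInter fun n => isClosed_eq (by fun_prop) (by fun_prop)
  exact isCompact_iff_compactSpace.mp this.isCompact

/-- Cumulative product of the weights. -/
noncomputable def W (w : ℕ → ℕ) (n : ℕ) : ℝ := ∏ i ∈ Finset.range n, (w i : ℝ)

lemma W_succ (w : ℕ → ℕ) (n : ℕ) : W w (n + 1) = W w n * w n := Finset.prod_range_succ _ _

lemma W_pos {w : ℕ → ℕ} (hw : ∀ n, 1 < w n) (n : ℕ) : 0 < W w n :=
  Finset.prod_pos fun i _ => by exact_mod_cast (zero_lt_one.trans (hw i))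

/-- The one-parameter subgroup. -/
noncomputable def gam {w : ℕ → ℕ} (hw : ∀ n, 1 < w n) (t : ℝ) : Solenoid w :=
  ⟨fun n => Circle.exp (t / W w n), fun n => by
    rw [← Circle.exp_natCast_mul, W_succ]
    have h1 := (W_pos hw n).ne'
    have h2 : (w n : ℝ) ≠ 0 := by exact_mod_cast (zero_lt_one.trans (hw n)).ne'
    field_simp⟩

lemma gam_coord {w : ℕ → ℕ} (hw : ∀ n, 1 < w n) (t : ℝ) (n : ℕ) :
    (gam hw t).1 n = Circle.exp (t / W w n) := rfl

lemma gam_add {w : ℕ → ℕ} (hw : ∀ n, 1 < w n) (s t : ℝ) :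
    gam hw (s + t) = gam hw s * gam hw t := by
  apply Subtype.ext; funext n
  change Circle.exp _ = Circle.exp _ * Circle.exp _
  rw [add_div, Circle.exp_add]

lemma gam_zero {w : ℕ → ℕ} (hw : ∀ n, 1 < w n) : gam hw 0 = 1 := by
  apply Subtype.ext; funext n
  change Circle.exp _ = 1
  simp

lemma gam_cont {w : ℕ → ℕ} (hw : ∀ n, 1 < w n) : Continuous (gam hw) := by
  refine Continuous.subtype_mk (continuous_pi fun n => ?_) _
  exact Circle.exp.continuous.comp (continuous_id.div_const _)

/-- Neighbourhoods contain coordinate cylinders. -/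
lemma nhds_cyl {w : ℕ → ℕ} (x : Solenoid w) {U : Set (Solenoid w)} (hU : U ∈ 𝓝 x) :
    ∃ n, ∀ y : Solenoid w, y.1 n = x.1 n → y ∈ U := by
  rw [nhds_induced, Filter.mem_comap] at hU
  obtain ⟨V, hV, hVU⟩ := hU
  rw [nhds_pi, Filter.mem_pi] at hV
  obtain ⟨I, hI, t, ht, hs⟩ := hV
  obtain ⟨n, hn⟩ := hI.bddAbove
  refine ⟨n, fun y hy => hVU (hs fun i hi => ?_)⟩
  rw [coord_agree (hn hi) hy]
  exact mem_of_mem_nhds (ht i)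

lemma exists_gam {w : ℕ → ℕ} (hw : ∀ n, 1 < w n) (n : ℕ) (z : Circle) :
    ∃ s ∈ Set.Icc (0 : ℝ) 1, (gam hw (2 * Real.pi * W w n * s)).1 n = z := by
  have hW := (W_pos hw n).ne'
  have hpi := Real.pi_pos
  obtain ⟨θ, h0, h1, hθ⟩ : ∃ θ : ℝ, 0 ≤ θ ∧ θ ≤ 2 * Real.pi ∧ Circle.exp θ = z := by
    have a1 := Complex.neg_pi_lt_arg (z : ℂ)
    have a2 := Complex.arg_le_pi (z : ℂ)
    by_cases h : 0 ≤ Complex.arg (z : ℂ)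
    · exact ⟨_, h, by linarith, Circle.exp_arg z⟩
    · refine ⟨Complex.arg (z : ℂ) + 2 * Real.pi, by linarith, by linarith, ?_⟩
      rw [Circle.exp_add_two_pi, Circle.exp_arg]
  refine ⟨θ / (2 * Real.pi), ⟨by positivity, by rw [div_le_one (by positivity)]; exact h1⟩, ?_⟩
  rw [gam_coord, ← hθ]
  congr 1; field_simp

lemma gam_dense {w : ℕ → ℕ} (hw : ∀ n, 1 < w n) : DenseRange (gam hw) := by
  intro x
  rw [mem_closure_iff_nhds]
  intro U hU
  obtain ⟨n, hn⟩ := nhds_cyl x hU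
  obtain ⟨s, _, hs⟩ := exists_gam hw n (x.1 n)
  exact ⟨_, hn _ hs, Set.mem_range_self _⟩

lemma connected {w : ℕ → ℕ} (hw : ∀ n, 1 < w n) : ConnectedSpace (Solenoid w) :=
  { toPreconnectedSpace := (gam_dense hw).preconnectedSpace (gam_cont hw)
    toNonempty := ⟨1⟩ }

lemma coprime_one {z : Circle} {r v : ℕ} (h : Nat.Coprime r v) (h1 : z ^ r = 1) (h2 : z ^ v = 1) :
    z = 1 := by
  have a := orderOf_dvd_of_pow_eq_one h1
  have b := orderOf_dvd_of_pow_eq_one h2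
  have := Nat.dvd_gcd a b
  rw [h] at this
  exact orderOf_eq_one_iff.mp (Nat.dvd_one.mp this)

lemma root_unique {w : ℕ → ℕ} {r N : ℕ} (hN : ∀ n ≥ N, Nat.Coprime r (w n)) (q : Solenoid w)
    (hq : q ^ r = 1) (h0 : q.1 N = 1) : q = 1 := by
  have hq' : ∀ n, q.1 n ^ r = 1 := fun n => congrFun (congrArg Subtype.val hq) n
  have key : ∀ k, q.1 (N + k) = 1 := by
    intro k
    induction k with
    | zero => exact h0
    | succ k ih =>
      refine coprime_one (hN (N + k) (by omega)) (hq' _) ?_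
      rw [← ih, rel q (N + k)]; rfl
  apply Subtype.ext; funext n
  rw [rel_add q n N, add_comm n N, key]; simp

lemma root_exists {w : ℕ → ℕ} {r N : ℕ} (hN : ∀ n ≥ N, Nat.Coprime r (w n)) (x : Solenoid w)
    (z : Circle) (hz : z ^ r = x.1 N) : ∃ y : Solenoid w, y ^ r = x ∧ y.1 N = z := by
  let u : ℕ → Circle := fun k => Nat.rec z
    (fun k v => x.1 (N + k + 1) ^ Nat.gcdA r (w (N + k)) * v ^ Nat.gcdB r (w (N + k))) k
  have u0 : u 0 = z := rfl
  have us : ∀ k, u (k + 1) = x.1 (N + k + 1) ^ Nat.gcdA r (w (N + k)) *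
    u k ^ Nat.gcdB r (w (N + k)) := fun k => rfl
  have bez : ∀ k, (r : ℤ) * Nat.gcdA r (w (N + k)) + w (N + k) * Nat.gcdB r (w (N + k)) = 1 := by
    intro k
    have := Nat.gcd_eq_gcd_ab r (w (N + k))
    rw [hN (N + k) (by omega)] at this
    exact_mod_cast this.symm
  have ur : ∀ k, u k ^ r = x.1 (N + k) := by
    intro k
    induction k with
    | zero => exact hz
    | succ k ih =>
      have : x.1 (N + (k + 1)) = x.1 (N + k + 1) ^ (1 : ℤ) := by rw [zpow_one]; rfl
      rw [this, ← bez k, us, mul_pow, zpow_add, ← zpow_natCast, ← zpow_natCast, ← zpow_mul,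
        ← zpow_mul, mul_comm (Nat.gcdB _ _), zpow_mul (u k), zpow_natCast (u k), ih, rel x (N + k),
        zpow_mul _ (w (N + k) : ℤ), zpow_natCast, mul_comm (r : ℤ)]
  have uw : ∀ k, u k = u (k + 1) ^ w (N + k) := by
    intro k
    have : u k = u k ^ (1 : ℤ) := by rw [zpow_one]
    rw [us, mul_pow]
    conv_lhs => rw [this, ← bez k, zpow_add, zpow_mul, zpow_natCast, ur, rel x (N + k)]
    rw [← zpow_natCast, ← zpow_natCast, ← zpow_natCast, ← zpow_mul, ← zpow_mul, ← zpow_mul,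
      mul_comm (w (N + k) : ℤ), mul_comm (w (N + k) : ℤ)]
  let y : Solenoid w := ⟨fun n => u n ^ ∏ i ∈ Finset.range N, w (n + i), fun n => by
    show u n ^ _ = (u (n + 1) ^ _) ^ w n
    rw [uw n, ← pow_mul, ← pow_mul]
    congr 1
    have h1 := Finset.prod_range_succ (fun i => w (n + i)) N
    have h2 := Finset.prod_range_succ' (fun i => w (n + i)) N
    rw [h1] at h2
    simp only [add_zero, add_comm N n] at h2 ⊢
    rw [mul_comm, h2]
    congr 1
    exact Finset.prod_congr rfl fun i _ => by congr 1; omega⟩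
  refine ⟨y, ?_, ?_⟩
  · apply Subtype.ext; funext n
    change (u n ^ _) ^ r = _
    rw [pow_right_comm, ur, rel_add x n N, add_comm]
  · have : ∀ k, u 0 = u k ^ ∏ i ∈ Finset.range k, w (N + i) := by
      intro k
      induction k with
      | zero => simp
      | succ k ih => rw [ih, uw k, ← pow_mul, Finset.prod_range_succ, mul_comm]
    exact (this N).symm.trans u0

lemma backward {w : ℕ → ℕ} {r : ℕ} (hr : 0 < r) {N : ℕ}
    (hN : ∀ n ≥ N, Nat.Coprime r (w n)) :
    IsCoveringMap (fun x : Solenoid w => x ^ r) ∧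
      ∀ y : Solenoid w, Nat.card ((fun x : Solenoid w => x ^ r) ⁻¹' {y}) = r := by
  have : NeZero r := ⟨hr.ne'⟩
  let f : Solenoid w →* Solenoid w := powMonoidHom r
  have hf : ⇑f = fun x => x ^ r := rfl
  have fc : Continuous f := by rw [hf]; fun_prop
  have hsurj : Function.Surjective f := by
    intro x
    obtain ⟨t, ht⟩ := Circle.exp_surjective (x.1 N)
    obtain ⟨y, hy, _⟩ := root_exists hN x (Circle.exp (t / r)) (by
      rw [← Circle.exp_natCast_mul, ← ht]; congr 1
      have : (r : ℝ) ≠ 0 := by exact_mod_cast hr.ne'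
      field_simp)
    exact ⟨y, hy⟩
  let e : f.ker → rootsOfUnity r Circle := fun q =>
    ⟨toUnits (q.1.1 N), by
      have h : q.1 ^ r = 1 := q.2
      rw [mem_rootsOfUnity']
      exact congrFun (congrArg Subtype.val h) N⟩
  have he : Function.Bijective e := by
    constructor
    · intro q q' h
      have h' : q.1.1 N = q'.1.1 N :=
        congrArg (fun u : rootsOfUnity r Circle => ((u : Circleˣ) : Circle)) h
      have h1 : q.1 ^ r = 1 := q.2
      have h2 : q'.1 ^ r = 1 := q'.2
      apply Subtype.ext
      rw [← div_eq_one]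
      refine root_unique hN _ ?_ ?_
      · rw [div_pow, h1, h2, div_one]
      · change q.1.1 N / q'.1.1 N = 1
        rw [h', div_self']
    · intro u
      obtain ⟨y, hy, hy'⟩ := root_exists hN 1 ((u : Circleˣ) : Circle) (by
        have := u.2
        rw [mem_rootsOfUnity'] at this
        exact this)
      refine ⟨⟨y, hy⟩, ?_⟩
      apply Subtype.ext; apply Units.ext; exact hy'
  have card : Nat.card f.ker = r := by
    rw [Nat.card_congr (Equiv.ofBijective e he), Nat.card_congr (rootsOfUnityCircleEquiv r).toEquiv,
      Complex.card_rootsOfUnity]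
  have fin : Finite f.ker := Nat.finite_of_card_ne_zero (by rw [card]; exact hr.ne')
  have disc : IsDiscrete (f.ker : Set (Solenoid w)) := ⟨inferInstanceAs (DiscreteTopology f.ker)⟩
  have hq : IsQuotientMap f := IsQuotientMap.of_surjective_continuous hsurj fc
  have hqc := hq.isQuotientCoveringMap_of_isDiscrete_ker_monoidHom disc
  refine ⟨hqc.isCoveringMap, fun y => ?_⟩
  obtain ⟨x, hx⟩ := hsurj y
  exact (Nat.card_congr (hqc.fiberEquivGroup (x := y) ⟨x, hx⟩)).trans card

open unitInterval in
lemma exists_flow {w : ℕ → ℕ} (hw : ∀ n, 1 < w n) {X : Type} [TopologicalSpace X]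
    {π : X → Solenoid w} (cov : IsCoveringMap π) :
    ∃ Φ : ℝ → X → X, (∀ t x, π (Φ t x) = gam hw t * π x) ∧ (∀ x, Φ 0 x = x) ∧
      (∀ s t x, Φ (s + t) x = Φ s (Φ t x)) ∧
      (∀ R : ℝ, Continuous fun p : I × X => Φ (R * p.1) p.2) := by
  have ex : ∀ x : X, ∃ F : C(ℝ, X), F 0 = x ∧ ∀ t, π (F t) = gam hw t * π x := by
    intro x
    obtain ⟨F, ⟨h0, h1⟩, _⟩ := cov.existsUnique_continuousMap_lifts
      (⟨fun t => gam hw t * π x, (gam_cont hw).mul continuous_const⟩ : C(ℝ, Solenoid w)) 0 x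
      (by simp [gam_zero])
    exact ⟨F, h0, fun t => congrFun h1 t⟩
  choose F F0 Fl using ex
  refine ⟨fun t x => F x t, fun t x => Fl x t, F0, fun s t x => ?_, fun R => ?_⟩
  · have := cov.eq_of_comp_eq (g₁ := fun s => F x (s + t)) (g₂ := fun s => F (F x t) s)
      (by fun_prop) (by fun_prop)
      (by funext s; simp only [Function.comp_apply, Fl, gam_add, mul_assoc]) 0
      (by simp [F0])
    exact congrFun this s
  · let H : C(I × X, Solenoid w) := ⟨fun p => gam hw (R * p.1) * π p.2, by
      have := gam_cont hw
      have := cov.continuous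
      fun_prop⟩
    have H0 : ∀ a, H (0, a) = π ((ContinuousMap.id X) a) := by
      intro a; simp [H, gam_zero]
    have := (cov.eq_liftHomotopy_iff (f := ContinuousMap.id X) H0
      (fun p : I × X => F p.2 (R * p.1))).mpr
      ⟨fun a => (F a).continuous.comp (by fun_prop : Continuous fun t : I => R * (t : ℝ)), by funext p; simp [H, Fl], fun a => by simp [F0]⟩
    rw [this]
    exact ContinuousMap.continuous _

lemma exists_triv {w : ℕ → ℕ} {X : Type} [TopologicalSpace X]
    {π : X → Solenoid w} (cov : IsCoveringMap π) (hne : Nonempty (π ⁻¹' {1}))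
    (hfin : Finite (π ⁻¹' {1})) :
    ∃ (n₀ : ℕ) (c : X → π ⁻¹' {1}), DiscreteTopology (π ⁻¹' {1}) ∧
      ContinuousOn c {x | (π x).1 n₀ = 1} ∧
      (∀ x x', (π x).1 n₀ = 1 → π x = π x' → c x = c x' → x = x') ∧
      (∀ i, ∃ x, π x = 1 ∧ c x = i) ∧
      (∀ n ≥ n₀, ∀ A : Set (π ⁻¹' {1}), IsCompact {x | (π x).1 n = 1 ∧ c x ∈ A}) := by
  classical
  obtain ⟨hd, U, h1U, hU, hfU, H, hH⟩ := cov 1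
  obtain ⟨n₀, hn₀⟩ := nhds_cyl (1 : Solenoid w) (hU.mem_nhds h1U)
  have hK : ∀ n ≥ n₀, ∀ y : Solenoid w, y.1 n = 1 → y ∈ U := fun n hn y hy =>
    hn₀ y (coord_agree (y := 1) hn hy)
  let c : X → π ⁻¹' {1} := fun x => if h : x ∈ π ⁻¹' U then (H ⟨x, h⟩).2 else hne.some
  have hc : ∀ x (h : x ∈ π ⁻¹' U), c x = (H ⟨x, h⟩).2 := fun x h => dif_pos h
  refine ⟨n₀, c, hd, ?_, ?_, ?_, ?_⟩
  · have : ContinuousOn c (π ⁻¹' U) := by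
      rw [continuousOn_iff_continuous_domRestrict]
      have : (π ⁻¹' U).domRestrict c = fun x => (H x).2 := by
        funext x; exact hc x.1 x.2
      rw [this]
      fun_prop
    exact this.mono fun x hx => hK n₀ le_rfl _ hx
  · intro x x' hx e ec
    have h : x ∈ π ⁻¹' U := hK n₀ le_rfl _ hx
    have h' : x' ∈ π ⁻¹' U := by rw [Set.mem_preimage, ← e]; exact h
    rw [hc x h, hc x' h'] at ec
    have : H ⟨x, h⟩ = H ⟨x', h'⟩ := by
      refine Prod.ext (Subtype.ext ?_) ec
      rw [hH, hH]; exact e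
    exact congrArg Subtype.val (H.injective this)
  · intro i
    refine ⟨(H.symm (⟨1, h1U⟩, i)).1, ?_, ?_⟩
    · rw [← hH]; simp
    · rw [hc _ (H.symm (⟨1, h1U⟩, i)).2]; simp
  · intro n hn A
    let K : Set (Solenoid w) := {y | y.1 n = 1}
    have hKc : IsCompact K := (isClosed_eq (continuous_coord n) continuous_const).isCompact
    have : CompactSpace K := isCompact_iff_compactSpace.mp hKc
    let g : K × (π ⁻¹' {1}) → X := fun p => (H.symm (⟨p.1.1, hK n hn _ p.1.2⟩, p.2)).1
    have gc : Continuous g := by fun_prop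
    have himg : {x | (π x).1 n = 1 ∧ c x ∈ A} = g '' (Set.univ ×ˢ A) := by
      ext x
      constructor
      · rintro ⟨hx, hxA⟩
        have h : x ∈ π ⁻¹' U := hK n hn _ hx
        refine ⟨(⟨π x, hx⟩, c x), ⟨trivial, hxA⟩, ?_⟩
        have : H ⟨x, h⟩ = (⟨π x, h⟩, c x) :=
          Prod.ext (Subtype.ext (hH _)) (hc x h).symm
        change (H.symm (⟨π x, h⟩, c x)).1 = x
        rw [← this]; simp
      · rintro ⟨⟨k, i⟩, ⟨_, hi⟩, rfl⟩
        have h1 : π (g (k, i)) = k.1 := by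
          change π (H.symm _).1 = _
          rw [← hH]; simp
        have h2 : c (g (k, i)) = i := by
          rw [hc _ (H.symm (⟨k.1, hK n hn _ k.2⟩, i)).2]; simp
        refine ⟨?_, ?_⟩
        · rw [h1]; exact k.2
        · rw [h2]; exact hi
    rw [himg]
    exact (isCompact_univ.prod A.toFinite.isCompact).image gc

lemma t2_of_cov {X Y : Type} [TopologicalSpace X] [TopologicalSpace Y] [T2Space Y]
    {π : X → Y} (cov : IsCoveringMap π) : T2Space X := by
  refine ⟨fun x y hxy => ?_⟩
  by_cases h : π x = π y
  · exact cov.isSeparatedMap x y h hxy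
  · obtain ⟨u, v, hu, hv, hx, hy, hd⟩ := t2_separation h
    exact ⟨π ⁻¹' u, π ⁻¹' v, hu.preimage cov.continuous, hv.preimage cov.continuous, hx, hy,
      hd.preimage π⟩

lemma period {J : Type} [Finite J] (σ : J → J) (inj : Function.Injective σ)
    (htrans : ∀ A : Set J, (∀ i, σ i ∈ A ↔ i ∈ A) → A.Nonempty → A = Set.univ) (i₀ : J) :
    Function.minimalPeriod σ i₀ = Nat.card J := by
  classical
  have := Fintype.ofFinite J
  let e : Equiv.Perm J := Equiv.ofBijective σ (Finite.injective_iff_bijective.mp inj)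
  have key := MulAction.minimalPeriod_eq_card (a := e) (b := i₀)
  have horb : MulAction.orbit (Subgroup.zpowers e) i₀ = Set.univ := by
    refine htrans _ (fun i => ?_) ⟨i₀, MulAction.mem_orbit_self _⟩
    let g : Subgroup.zpowers e := ⟨e, Subgroup.mem_zpowers e⟩
    have hg : σ i = g • i := rfl
    rw [hg]
    refine ⟨fun h => ?_, fun h => MulAction.mem_orbit_of_mem_orbit g h⟩
    have := MulAction.mem_orbit_of_mem_orbit g⁻¹ h
    rwa [inv_smul_smul] at this
  have h2 : (fun x : J => e • x) = σ := rfl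
  rw [h2] at key
  rw [key, ← Nat.card_eq_fintype_card, horb, Nat.card_congr (Equiv.Set.univ J)]

lemma coprime_of_period {J : Type} [Finite J] [Nonempty J] (σ τ : J → J) (k : ℕ)
    (hk : τ = σ^[k]) (injσ : Function.Injective σ) (injτ : Function.Injective τ)
    (hσ : ∀ A : Set J, (∀ i, σ i ∈ A ↔ i ∈ A) → A.Nonempty → A = Set.univ)
    (hτ : ∀ A : Set J, (∀ i, τ i ∈ A ↔ i ∈ A) → A.Nonempty → A = Set.univ) (hk0 : k ≠ 0) :
    Nat.Coprime (Nat.card J) k := by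
  obtain ⟨i₀⟩ := ‹Nonempty J›
  have h1 := period σ injσ hσ i₀
  have h2 := period τ injτ hτ i₀
  rw [hk, Function.minimalPeriod_iterate_eq_div_gcd hk0, h1] at h2
  rcases Nat.div_eq_self.mp h2 with h | h
  · have : Nat.card J ≠ 0 := (Nat.card_pos_iff.mpr ⟨⟨i₀⟩, inferInstance⟩).ne'
    exact absurd h this
  · exact h

lemma forward {w : ℕ → ℕ} (hw : ∀ n, 1 < w n) {X : Type} [TopologicalSpace X] [ConnectedSpace X]
    {π : X → Solenoid w} (cov : IsCoveringMap π) (hne : Nonempty (π ⁻¹' {1}))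
    (hfin : Finite (π ⁻¹' {1})) :
    ∃ N : ℕ, ∀ n ≥ N, Nat.Coprime (Nat.card (π ⁻¹' {1})) (w n) := by
  obtain ⟨Φ, Φπ, Φ0, Φadd, Φcont⟩ := exists_flow hw cov
  obtain ⟨n₀, c, hd, ccont, cinj, csurj, ccomp⟩ := exists_triv cov hne hfin
  have hT2 := t2_of_cov cov
  choose b bπ bc using csurj
  let T : ℕ → ℝ := fun n => 2 * Real.pi * W w n
  have Tpos : ∀ n, 0 < T n := fun n => by
    have := W_pos hw n; have := Real.pi_pos; positivity
  have gT : ∀ n, (gam hw (T n)).1 n = 1 := by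
    intro n
    rw [gam_coord, mul_div_assoc, div_self (W_pos hw n).ne', mul_one, Circle.exp_two_pi]
  have Φcoord : ∀ t x n, (π (Φ t x)).1 n = (gam hw t).1 n * (π x).1 n := by
    intro t x n; rw [Φπ]; rfl
  have Φinj : ∀ t x y, Φ t x = Φ t y → x = y := by
    intro t x y h
    have := congrArg (Φ (-t)) h
    rwa [← Φadd, ← Φadd, neg_add_cancel, Φ0, Φ0] at this
  have Φc : ∀ t, Continuous (Φ t) := by
    intro t
    have := (Φcont t).comp (Continuous.prodMk_right (1 : unitInterval) (Y := X))
    simpa [Function.comp_def] using this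
  have stay : ∀ n x, (π x).1 n = 1 → (π (Φ (T n) x)).1 n = 1 := by
    intro n x h; rw [Φcoord, gT, h, one_mul]
  -- uniform local constancy
  obtain ⟨m, hm, unif⟩ : ∃ m ≥ n₀, ∀ x x', (π x).1 n₀ = 1 → (π x').1 n₀ = 1 →
      (π x).1 m = (π x').1 m → c x = c x' → c (Φ (T n₀) x) = c (Φ (T n₀) x') := by
    let P : Set X := {x | (π x).1 n₀ = 1}
    have hP : IsCompact P := by
      have := ccomp n₀ le_rfl Set.univ
      simpa [P] using this
    have : CompactSpace P := isCompact_iff_compactSpace.mp hP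
    let f : P → π ⁻¹' {1} := fun x => c x.1
    let g : P → π ⁻¹' {1} := fun x => c (Φ (T n₀) x.1)
    have fc : Continuous f := continuousOn_iff_continuous_domRestrict.mp ccont
    have gc : Continuous g :=
      ccont.comp_continuous ((Φc _).comp continuous_subtype_val) fun x => stay n₀ x.1 x.2
    let D : ℕ → Set (P × P) := fun k =>
      {p | (π p.1.1).1 (n₀ + k) = (π p.2.1).1 (n₀ + k)} ∩
        {p | f p.1 = f p.2 ∧ g p.1 ≠ g p.2}
    have Dcl : ∀ k, IsClosed (D k) := by
      intro k
      have h1 : Continuous fun x : P => (π x.1).1 (n₀ + k) :=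
        (continuous_coord (n₀ + k)).comp (cov.continuous.comp continuous_subtype_val)
      refine IsClosed.inter (isClosed_eq (h1.comp continuous_fst) (h1.comp continuous_snd)) ?_
      have h2 : Continuous fun p : P × P => ((f p.1, f p.2), (g p.1, g p.2)) := by fun_prop
      exact (isClosed_discrete {q : (π ⁻¹' {1} × π ⁻¹' {1}) × (π ⁻¹' {1} × π ⁻¹' {1}) |
        q.1.1 = q.1.2 ∧ q.2.1 ≠ q.2.2}).preimage h2
    by_contra hcon
    push Not at hcon
    have hne : ∀ k, (D k).Nonempty := by
      intro k
      obtain ⟨x, x', hx, hx', h1, h2, h3⟩ := hcon (n₀ + k) (by omega)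
      exact ⟨(⟨x, hx⟩, ⟨x', hx'⟩), h1, h2, h3⟩
    obtain ⟨p, hp⟩ := IsCompact.nonempty_iInter_of_sequence_nonempty_isCompact_isClosed D
      (fun k p hp => ⟨coord_agree (by omega) hp.1, hp.2⟩) hne (Dcl 0).isCompact Dcl
    rw [Set.mem_iInter] at hp
    have e : π p.1.1 = π p.2.1 := by
      apply Subtype.ext; funext k
      exact coord_agree (by omega) (hp k).1
    have := cinj _ _ p.1.2 e (hp 0).2.1
    have := congrArg (fun x => c (Φ (T n₀) x)) this
    exact (hp 0).2.2 this
  have iter : ∀ j : ℕ, ∀ x x', (π x).1 n₀ = 1 → (π x').1 n₀ = 1 →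
      (π x).1 m = (π x').1 m → c x = c x' → c (Φ (j * T n₀) x) = c (Φ (j * T n₀) x') := by
    intro j
    induction j with
    | zero => intro x x' _ _ _ h; simpa [Φ0] using h
    | succ j ih =>
      intro x x' hx hx' h1 h2
      have e : ((j + 1 : ℕ) : ℝ) * T n₀ = j * T n₀ + T n₀ := by push_cast; ring
      rw [e, Φadd, Φadd]
      exact ih _ _ (stay _ _ hx) (stay _ _ hx') (by rw [Φcoord, Φcoord, h1]) (unif x x' hx hx' h1 h2)
  have Tsucc : ∀ n, T (n + 1) = w n * T n := by
    intro n; simp only [T, W_succ]; ring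
  have Tmul : ∀ k, ∃ q : ℕ, T (n₀ + k) = q * T n₀ := by
    intro k
    induction k with
    | zero => exact ⟨1, by simp⟩
    | succ k ih =>
      obtain ⟨q, hq⟩ := ih
      refine ⟨w (n₀ + k) * q, ?_⟩
      rw [← add_assoc, Tsucc, hq]; push_cast; ring
  have one_le : ∀ {a n : ℕ} {y : Solenoid w}, a ≤ n → y.1 n = 1 → y.1 a = 1 :=
    fun {a n y} h h' => coord_agree (y := 1) h h'
  have main : ∀ n ≥ m, ∀ x x', (π x).1 n = 1 → (π x').1 n = 1 → c x = c x' →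
      c (Φ (T n) x) = c (Φ (T n) x') := by
    intro n hn x x' hx hx' h
    obtain ⟨k, rfl⟩ := Nat.exists_eq_add_of_le (hm.le.trans hn : n₀ ≤ n)
    obtain ⟨q, hq⟩ := Tmul k
    rw [hq]
    exact iter q x x' (one_le (by omega) hx) (one_le (by omega) hx')
      ((one_le hn hx).trans (one_le hn hx').symm) h
  let σ : ℕ → π ⁻¹' {1} → π ⁻¹' {1} := fun n i => c (Φ (T n) (b i))
  have b1 : ∀ i n, (π (b i)).1 n = 1 := by intro i n; rw [bπ]; rfl
  have σc : ∀ n ≥ m, ∀ x, (π x).1 n = 1 → c (Φ (T n) x) = σ n (c x) := fun n hn x hx =>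
    main n hn x _ hx (b1 _ _) (bc _).symm
  have σiter : ∀ n ≥ m, ∀ j : ℕ, ∀ x, (π x).1 n = 1 → c (Φ (j * T n) x) = (σ n)^[j] (c x) := by
    intro n hn j
    induction j with
    | zero => intro x _; simp [Φ0]
    | succ j ih =>
      intro x hx
      have e : ((j + 1 : ℕ) : ℝ) * T n = j * T n + T n := by push_cast; ring
      rw [e, Φadd, ih _ (stay _ _ hx), σc n hn x hx, Function.iterate_succ_apply]
  have σinj : ∀ n ≥ m, Function.Injective (σ n) := by
    intro n hn i i' h
    have h1 : (π (Φ (T n) (b i))).1 n₀ = 1 := one_le (hm.le.trans hn) (stay n _ (b1 i n))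
    have h2 := cinj _ _ h1 (by rw [Φπ, Φπ, bπ, bπ]) h
    rw [← bc i, ← bc i', Φinj _ _ _ h2]
  have trans : ∀ n ≥ m, ∀ A : Set (π ⁻¹' {1}), (∀ i, σ n i ∈ A ↔ i ∈ A) → A.Nonempty →
      A = Set.univ := by
    intro n hn A hA hAne
    have hAj : ∀ (j : ℕ) i, (σ n)^[j] i ∈ A ↔ i ∈ A := by
      intro j
      induction j with
      | zero => intro i; rfl
      | succ j ih => intro i; rw [Function.iterate_succ_apply, ih, hA]
    have half : ∀ t t' x x', t' ≤ t → (π x).1 n = 1 → (π x').1 n = 1 → Φ t x = Φ t' x' →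
        (c x ∈ A ↔ c x' ∈ A) := by
      intro t t' x x' htt hx hx' h
      have e : Φ (t - t') x = x' := by
        apply Φinj t'
        rw [← Φadd, ← h]; congr 1; ring
      have g1 : (gam hw (t - t')).1 n = 1 := by
        have := Φcoord (t - t') x n
        rw [e, hx, hx', mul_one] at this
        exact this.symm
      rw [gam_coord, Circle.exp_eq_one] at g1
      obtain ⟨j, hj⟩ := g1
      have hj' : t - t' = j * T n := by
        rw [div_eq_iff (W_pos hw n).ne'] at hj
        rw [hj]; ring
      have hj0 : 0 ≤ j := by
        by_contra hneg
        have : (j : ℝ) < 0 := by exact_mod_cast not_le.mp hneg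
        have := mul_neg_of_neg_of_pos this (Tpos n)
        linarith
      lift j to ℕ using hj0
      rw [← e, hj', Int.cast_natCast, σiter n hn j x hx, hAj]
    let Y : Set (π ⁻¹' {1}) → Set X := fun B =>
      (fun p : unitInterval × X => Φ (T n * p.1) p.2) ''
        (Set.univ ×ˢ {x | (π x).1 n = 1 ∧ c x ∈ B})
    have Ycl : ∀ B, IsClosed (Y B) := fun B =>
      ((isCompact_univ.prod (ccomp n (hm.le.trans hn) B)).image (Φcont (T n))).isClosed
    have Yb : ∀ i B, i ∈ B → b i ∈ Y B := by
      intro i B hi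
      exact ⟨(0, b i), ⟨trivial, b1 i n, by rw [bc]; exact hi⟩, by simp [Φ0]⟩
    have Ydisj : ∀ x, x ∈ Y A → x ∈ Y Aᶜ → False := by
      rintro _ ⟨⟨s, x⟩, ⟨_, hx, hxA⟩, rfl⟩ ⟨⟨s', x'⟩, ⟨_, hx', hxA'⟩, h⟩
      dsimp only at hx hx' hxA hxA' h
      rcases le_total (T n * (s : ℝ)) (T n * (s' : ℝ)) with hs | hs
      · exact hxA' ((half _ _ x' x hs hx' hx h).mpr hxA)
      · exact hxA' ((half _ _ x x' hs hx hx' h.symm).mp hxA)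
    have Ycov : ∀ x, x ∈ Y A ∨ x ∈ Y Aᶜ := by
      intro x
      obtain ⟨s, hs, hg⟩ := exists_gam hw n ((π x).1 n)
      have h1 : (π (Φ (-(T n * s)) x)).1 n = 1 := by
        have h2 := Φcoord (T n * s) (Φ (-(T n * s)) x) n
        rw [← Φadd, add_neg_cancel, Φ0, hg] at h2
        exact (mul_eq_left.mp h2.symm)
      have h3 : Φ (T n * s) (Φ (-(T n * s)) x) = x := by
        rw [← Φadd, add_neg_cancel, Φ0]
      by_cases hx : c (Φ (-(T n * s)) x) ∈ A
      · exact Or.inl ⟨(⟨s, hs⟩, _), ⟨trivial, h1, hx⟩, h3⟩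
      · exact Or.inr ⟨(⟨s, hs⟩, _), ⟨trivial, h1, hx⟩, h3⟩
    have hcompl : (Y A)ᶜ = Y Aᶜ := by
      ext x
      exact ⟨fun h => (Ycov x).resolve_left h, fun h h' => Ydisj x h' h⟩
    have hclopen : IsClopen (Y A) := ⟨Ycl A, by
      rw [← isClosed_compl_iff, hcompl]; exact Ycl _⟩
    obtain ⟨i₁, hi₁⟩ := hAne
    have huniv := hclopen.eq_univ ⟨_, Yb i₁ A hi₁⟩
    ext i
    refine ⟨fun _ => trivial, fun _ => ?_⟩
    by_contra hi
    exact Ydisj (b i) (by rw [huniv]; trivial) (Yb i Aᶜ hi)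
  refine ⟨m, fun n hn => ?_⟩
  refine coprime_of_period (σ n) (σ (n + 1)) (w n) ?_ (σinj n hn) (σinj (n + 1) (by omega))
    (trans n hn) (trans (n + 1) (by omega)) (zero_lt_one.trans (hw n)).ne'
  funext i
  have := σiter n hn (w n) (b i) (b1 i n)
  rw [← Tsucc, bc] at this
  exact this

end SolenoidProof

/-- **A solenoid of type (w₁, w₂, …) has a connected r-fold covering if and only
if r is relatively prime to all but finitely many of the wₙ.** -/
theorem solenoid_has_connected_cover_iff
    (w : ℕ → ℕ) (hw : ∀ n, 1 < w n) (r : ℕ) (hr : 0 < r) :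
    (∃ (X : Type) (_ : TopologicalSpace X), ConnectedSpace X ∧
        ∃ π : X → Solenoid w, IsCoveringMap π ∧
          ∀ y : Solenoid w, Nat.card (π ⁻¹' {y}) = r) ↔
      ∃ N : ℕ, ∀ n ≥ N, Nat.Coprime r (w n) := by
  constructor
  · rintro ⟨X, _, hX, π, cov, hcard⟩
    have h1 := hcard 1
    have hpos : 0 < Nat.card (π ⁻¹' {1}) := by rw [h1]; exact hr
    obtain ⟨hne, hfin⟩ := Nat.card_pos_iff.mp hpos
    have := SolenoidProof.forward hw cov hne hfin
    rwa [h1] at this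
  · rintro ⟨N, hN⟩
    have h := SolenoidProof.backward hr hN
    exact ⟨Solenoid w, inferInstance, SolenoidProof.connected hw, _, h.1, h.2⟩
end
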